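/- The Dyck language of correct bracket expressions over the alphabet {(, )} (the set of balanced bracket sequences) is not k-rated linear for any nonnegative rational k; in particular, it is not fix-rated linear. -/

import Mathlib

/-!
Call `excess p` the number of `(` minus the number of `)` in `p`. In a linear grammar for the Dyck
language, if the start symbol derives `x B y` (not both `x`, `y` empty) and `B` derives `z`, then
`x z y` is balanced, so `excess x + excess y = - excess z`. Replacing `z` by one fixed word derived
from `B` shows that this value depends on `B` only; since only finitely many nonterminals are left
sides of productions, `|excess x + excess y|` is bounded by a constant `K`
(`exists_excess_bound`).

On the other hand every long derived word can be cut as `x z y` with `|x| + |y|` in a prescribed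
window of constant width (`LinDerives.exists_cut`), and the rate forces `h |y| = g |x|`. This
contradicts the bound:
* if `g = 0`, then `y` is empty, and in `(ᵐ )ᵐ` the prefix `x = (ᵗ` has excess `t`;
* if `g > 0`, then in `()ᵐ (ᵐ )ᵐ` the prefix `x` lies inside `()ᵐ` and has excess at most `1`,
  whereas `y` consists of closing brackets only and its length is at least `|x| + |y|` over `g + h`.
-/

/-- The `i`-fold repetition `v^i` of a word `v`. -/
def wordPow {T : Type} (v : List T) : ℕ → List T
  | 0 => []
  | n + 1 => v ++ wordPow v n

/-- A production of a linear grammar: either `A → u` (with `u` a terminal word)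
or `A → u B w` (with `u, w` terminal words and `B` a nonterminal). -/
structure LinearRule (T N : Type) where
  input : N
  output : List T ⊕ (List T × N × List T)

/-- `LinDerives rs A p` : from nonterminal `A`, the linear productions in `rs`
derive the terminal word `p`. -/
inductive LinDerives {T N : Type} (rs : List (LinearRule T N)) : N → List T → Prop
  | terminal {A : N} {u : List T} (hr : (⟨A, Sum.inl u⟩ : LinearRule T N) ∈ rs) :
      LinDerives rs A u
  | step {A B : N} {u w p : List T}
      (hr : (⟨A, Sum.inr (u, B, w)⟩ : LinearRule T N) ∈ rs)
      (hp : LinDerives rs B p) :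
      LinDerives rs A (u ++ p ++ w)

/-- A linear grammar: a type of nonterminals, a start symbol, and a
finite list of linear productions. -/
structure LinearGrammar (T : Type) where
  NT : Type
  start : NT
  rules : List (LinearRule T NT)

/-- The language generated by a linear grammar. -/
def LinearGrammar.language {T : Type} (G : LinearGrammar T) : Set (List T) :=
  {p | LinDerives G.rules G.start p}

/-- A linear grammar is `(g/h)`-rated linear (`k = g/h`) if every production
`A → u B w` satisfies `h * |w| = g * |u|`. -/
def LinearGrammar.IsRated {T : Type} (g h : ℕ) (G : LinearGrammar T) : Prop :=
  ∀ r ∈ G.rules, ∀ u w, ∀ B : G.NT, r.output = Sum.inr (u, B, w) →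
    h * w.length = g * u.length

/-- A grammar generates exactly the language `L`, up to the empty word. -/
def LinearGrammar.GeneratesModEmpty {T : Type} (G : LinearGrammar T) (L : Set (List T)) :
    Prop :=
  ∀ p : List T, p ≠ [] → (p ∈ L ↔ p ∈ G.language)

/-- A language is linear if some linear grammar generates it, up to the empty word. -/
def IsLinearLang {T : Type} (L : Set (List T)) : Prop :=
  ∃ G : LinearGrammar T, G.GeneratesModEmpty L

/-- A language is `(g/h)`-rated linear if some `(g/h)`-rated linear grammar
generates it, up to the empty word. -/
def IsRatedLinearLang {T : Type} (g h : ℕ) (L : Set (List T)) : Prop :=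
  ∃ G : LinearGrammar T, G.IsRated g h ∧ G.GeneratesModEmpty L

/-- A `k`-linear grammar: a linear grammar together with the extra production
`S → S₁S₂⋯S_k` from a start symbol `S`, where none of the `Sᵢ` (the `heads`)
occurs on the right-hand side of any other production and `S` occurs in no other
production at all (the latter is automatic here, since the start symbol is kept
as a fresh symbol outside the type `NT` of the remaining nonterminals). -/
structure KLinearGrammar (T : Type) (k : ℕ) where
  NT : Type
  heads : Fin k → NT
  rules : List (LinearRule T NT)
  heads_not_on_rhs : ∀ r ∈ rules, ∀ u w, ∀ B : NT, r.output = Sum.inr (u, B, w) →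
    ∀ i : Fin k, B ≠ heads i

/-- The language generated by a `k`-linear grammar: as the start symbol occurs
only in the production `S → S₁S₂⋯S_k`, it consists of the concatenations
`p₁p₂⋯p_k` where each `pᵢ` is derived from `Sᵢ` by the linear productions. -/
def KLinearGrammar.language {T : Type} {k : ℕ} (G : KLinearGrammar T k) : Set (List T) :=
  {p | ∃ ps : Fin k → List T, p = (List.ofFn ps).flatten ∧
    ∀ i : Fin k, LinDerives G.rules (G.heads i) (ps i)}

/-- A language is `k`-linear if some `k`-linear grammar generates it, up to the
empty word. -/
def IsKLinearLang {T : Type} (k : ℕ) (L : Set (List T)) : Prop :=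
  ∃ G : KLinearGrammar T k, ∀ p : List T, p ≠ [] → (p ∈ L ↔ p ∈ G.language)

/-- A language is metalinear if it is `k`-linear for some positive integer `k`. -/
def IsMetalinearLang {T : Type} (L : Set (List T)) : Prop :=
  ∃ k : ℕ, 0 < k ∧ IsKLinearLang k L

/-- The Dyck language of balanced bracket expressions over `{(, )}` (Example 8):
here the alphabet is `Fin 2` with `( = 0` and `) = 1`; a word is in the language
iff every prefix has at least as many `(`s as `)`s and the whole word has equally
many `(`s and `)`s. -/
def dyckLang : Set (List (Fin 2)) :=
  {p | (∀ q : List (Fin 2), q <+: p → q.count 1 ≤ q.count 0) ∧ p.count 0 = p.count 1}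

/-- The number of opening brackets minus the number of closing brackets. -/
def excess (p : List (Fin 2)) : ℤ := (p.count 0 : ℤ) - p.count 1

lemma excess_append (p q : List (Fin 2)) : excess (p ++ q) = excess p + excess q := by
  simp only [excess, List.count_append]; push_cast; ring

lemma excess_nil : excess [] = 0 := by simp [excess]

lemma excess_replicate_zero (n : ℕ) : excess (List.replicate n 0) = n := by
  simp [excess, List.count_replicate]

lemma excess_replicate_one (n : ℕ) : excess (List.replicate n 1) = -n := by
  simp [excess, List.count_replicate]

lemma mem_dyckLang_iff (p : List (Fin 2)) :
    p ∈ dyckLang ↔ (∀ q, q <+: p → 0 ≤ excess q) ∧ excess p = 0 := by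
  simp only [dyckLang, excess, Set.mem_ofPred_eq]
  refine and_congr (forall_congr' fun q => imp_congr_right fun _ => ?_) ?_ <;> omega

lemma prefix_append_cases {α : Type*} {q l l' : List α} (hq : q <+: l ++ l') :
    q <+: l ∨ ∃ s, q = l ++ s ∧ s <+: l' := by
  rcases List.prefix_or_prefix_of_prefix hq (List.prefix_append l l') with h | ⟨s, rfl⟩
  · exact Or.inl h
  · exact Or.inr ⟨s, rfl, (List.prefix_append_right_inj l).1 hq⟩

lemma exists_forall_mem_le {α : Type*} (l : List α) (f : α → ℕ) : ∃ K, ∀ a ∈ l, f a ≤ K :=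
  ⟨(l.map f).sum, fun _ ha => List.le_sum_of_mem (List.mem_map_of_mem ha)⟩

/-- The number of terminals on the right-hand side of a production. -/
def LinearRule.size {T N : Type} (r : LinearRule T N) : ℕ :=
  Sum.elim (fun u => u.length) (fun q => q.1.length + q.2.2.length) r.output

/-- A long derived word can be cut at an intermediate sentential form `x B y` whose number of
terminals lies in `[t, t + C]`, where `C` bounds the sizes of the productions. That `A` derives
`x B y` is expressed by its action on the words derived from `B`. -/
lemma LinDerives.exists_cut {T N : Type} {rs : List (LinearRule T N)} {g h C : ℕ}
    (hC : ∀ r ∈ rs, r.size ≤ C)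
    (hrate : ∀ r ∈ rs, ∀ u w, ∀ B : N, r.output = Sum.inr (u, B, w) →
      h * w.length = g * u.length)
    {A : N} {p : List T} (hp : LinDerives rs A p) (t : ℕ) (ht : t + C < p.length) :
    ∃ x B z y, p = x ++ z ++ y ∧ LinDerives rs B z ∧
      (∀ z', LinDerives rs B z' → LinDerives rs A (x ++ z' ++ y)) ∧
      t ≤ x.length + y.length ∧ x.length + y.length ≤ t + C ∧
      h * y.length = g * x.length := by
  induction hp generalizing t with
  | terminal hr =>
    have := hC _ hr
    simp only [LinearRule.size, Sum.elim_inl] at this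
    omega
  | @step A B u w p hr hp ih =>
    have hs := hC _ hr
    simp only [LinearRule.size, Sum.elim_inr] at hs
    have hk := hrate _ hr u w B rfl
    by_cases hle : t ≤ u.length + w.length
    · exact ⟨u, B, p, w, rfl, hp, fun z' hz' => .step hr hz', hle, by omega, hk⟩
    · simp only [List.length_append] at ht
      obtain ⟨x, D, z, y, rfl, hz, hD, h1, h2, h3⟩ := ih (t - (u.length + w.length)) (by omega)
      refine ⟨u ++ x, D, z, y ++ w, by simp, hz, fun z' hz' => ?_, ?_, ?_, ?_⟩
      · simpa using LinDerives.step hr (hD z' hz')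
      · simp only [List.length_append]; omega
      · simp only [List.length_append]; omega
      · simp only [List.length_append]; linarith

lemma LinDerives.exists_rule {T N : Type} {rs : List (LinearRule T N)} {A : N} {p : List T}
    (hp : LinDerives rs A p) : ∃ r ∈ rs, r.input = A := by
  cases hp with
  | terminal hr => exact ⟨_, hr, rfl⟩
  | step hr _ => exact ⟨_, hr, rfl⟩

lemma exists_excess_bound (G : LinearGrammar (Fin 2)) (hG : G.GeneratesModEmpty dyckLang) :
    ∃ K : ℕ, ∀ x y B z, 0 < x.length + y.length → LinDerives G.rules B z →
      (∀ z', LinDerives G.rules B z' → LinDerives G.rules G.start (x ++ z' ++ y)) →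
      |excess x + excess y| ≤ K := by
  classical
  -- `f B` is the absolute excess of one fixed word derived from `B`, if there is one.
  let f : G.NT → ℕ := fun B =>
    if hB : ∃ z, LinDerives G.rules B z then (excess hB.choose).natAbs else 0
  obtain ⟨K, hK⟩ := exists_forall_mem_le G.rules (fun r => f r.input)
  refine ⟨K, fun x y B z hpos hz hder => ?_⟩
  obtain ⟨r, hr, rfl⟩ := hz.exists_rule
  have hB : ∃ z, LinDerives G.rules r.input z := ⟨z, hz⟩
  have hle := hK r hr
  simp only [f, dif_pos hB] at hle
  have hmem := hder _ hB.choose_spec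
  have hne : x ++ hB.choose ++ y ≠ [] := by
    intro h0
    have := congrArg List.length h0
    simp only [List.length_append, List.length_nil] at this
    omega
  have h0 := ((mem_dyckLang_iff _).1 ((hG _ hne).2 hmem)).2
  rw [excess_append, excess_append] at h0
  rw [abs_le]
  omega

lemma excess_nonneg_of_prefix_nested (m : ℕ) (q : List (Fin 2))
    (hq : q <+: List.replicate m 0 ++ List.replicate m 1) : 0 ≤ excess q := by
  rcases prefix_append_cases hq with h | ⟨s, rfl, h⟩
  · rw [(List.prefix_replicate_iff.1 h).2, excess_replicate_zero]; positivity
  · obtain ⟨h1, h2⟩ := List.prefix_replicate_iff.1 h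
    rw [h2, excess_append, excess_replicate_zero, excess_replicate_one]
    omega

lemma nested_mem (m : ℕ) : List.replicate m 0 ++ List.replicate m 1 ∈ dyckLang := by
  rw [mem_dyckLang_iff]
  refine ⟨excess_nonneg_of_prefix_nested m, ?_⟩
  rw [excess_append, excess_replicate_zero, excess_replicate_one]; ring

lemma wordPow_length (n : ℕ) : (wordPow [(0 : Fin 2), 1] n).length = 2 * n := by
  induction n with
  | zero => rfl
  | succ n ih => simp only [wordPow, List.length_append, ih, List.length_cons, List.length_nil]; ring

lemma excess_wordPow (n : ℕ) : excess (wordPow [(0 : Fin 2), 1] n) = 0 := by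
  induction n with
  | zero => rfl
  | succ n ih => rw [wordPow, excess_append, ih]; rfl

lemma excess_prefix_wordPow (n : ℕ) (q : List (Fin 2)) (hq : q <+: wordPow [(0 : Fin 2), 1] n) :
    0 ≤ excess q ∧ excess q ≤ 1 := by
  induction n generalizing q with
  | zero => simp only [wordPow, List.prefix_nil] at hq; subst hq; simp [excess]
  | succ n ih =>
    match q, hq with
    | [], _ => simp [excess]
    | [a], hq =>
      simp only [wordPow, List.cons_append, List.cons_prefix_cons] at hq
      rw [hq.1]; decide
    | a :: b :: q, hq =>
      simp only [wordPow, List.cons_append, List.nil_append, List.cons_prefix_cons] at hq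
      obtain ⟨rfl, rfl, hq⟩ := hq
      have h1 := ih q hq
      have h2 := excess_append [0, 1] q
      have h3 : excess [0, 1] = 0 := rfl
      simp only [List.cons_append, List.nil_append] at h2
      omega

lemma wordPow_append_nested_mem (n m : ℕ) :
    wordPow [0, 1] n ++ (List.replicate m 0 ++ List.replicate m 1) ∈ dyckLang := by
  rw [mem_dyckLang_iff]
  constructor
  · intro q hq
    rcases prefix_append_cases hq with h | ⟨s, rfl, h⟩
    · exact (excess_prefix_wordPow n q h).1
    · rw [excess_append, excess_wordPow, zero_add]
      exact excess_nonneg_of_prefix_nested m s h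
  · rw [excess_append, excess_wordPow, ((mem_dyckLang_iff _).1 (nested_mem m)).2]; rfl

lemma dyck_not_isRatedLinearLang (g h : ℕ) (hh : h ≠ 0) : ¬ IsRatedLinearLang g h dyckLang := by
  rintro ⟨G, hrate, hG⟩
  obtain ⟨K, hK⟩ := exists_excess_bound G hG
  obtain ⟨C, hC⟩ := exists_forall_mem_le G.rules LinearRule.size
  rcases Nat.eq_zero_or_pos g with rfl | hg
  · set m := K + 1 + C with hm
    have hlen : (List.replicate m (0 : Fin 2) ++ List.replicate m 1).length = 2 * m := by
      simp only [List.length_append, List.length_replicate]; ring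
    have hne : List.replicate m (0 : Fin 2) ++ List.replicate m 1 ≠ [] := by
      intro h0; rw [h0, List.length_nil] at hlen; omega
    obtain ⟨x, B, z, y, hp, hz, hder, h1, h2, h3⟩ :=
      LinDerives.exists_cut hC hrate ((hG _ hne).1 (nested_mem m)) (K + 1) (by omega)
    have hy : y = [] := by
      rw [zero_mul] at h3
      exact List.length_eq_zero_iff.1 ((Nat.mul_eq_zero.1 h3).resolve_left hh)
    subst hy
    have hb := hK x [] B z (by omega) hz hder
    simp only [List.length_nil, add_zero] at h1 h2
    have hx : x <+: List.replicate m 0 :=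
      List.prefix_of_prefix_length_le (l₃ := List.replicate m (0 : Fin 2) ++ List.replicate m 1)
        ⟨z ++ [], by rw [hp]; simp⟩ (List.prefix_append _ _) (by simp; omega)
    rw [(List.prefix_replicate_iff.1 hx).2, excess_replicate_zero, excess_nil, abs_le] at hb
    omega
  · set t := (g + h) * (K + 2) with ht
    set m := t + C with hm
    have htpos : 0 < t := by positivity
    set p := wordPow [(0 : Fin 2), 1] m ++ (List.replicate m 0 ++ List.replicate m 1) with hpdef
    have hlen : p.length = 4 * m := by
      simp only [hpdef, List.length_append, List.length_replicate, wordPow_length]; ring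
    have hne : p ≠ [] := by
      intro h0; rw [h0, List.length_nil] at hlen; omega
    obtain ⟨x, B, z, y, hp, hz, hder, h1, h2, h3⟩ :=
      LinDerives.exists_cut hC hrate ((hG _ hne).1 (wordPow_append_nested_mem m m)) t (by omega)
    have hb := hK x y B z (by omega) hz hder
    have hx : x <+: wordPow [0, 1] m :=
      List.prefix_of_prefix_length_le (l₃ := p)
        ⟨z ++ y, by rw [hp]; simp⟩ (List.prefix_append _ _) (by rw [wordPow_length]; omega)
    have hy : y <:+ List.replicate m 1 :=
      List.suffix_of_suffix_length_le (l₃ := p)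
        ⟨x ++ z, by rw [hp]⟩ ⟨wordPow [0, 1] m ++ List.replicate m 0, by simp [hpdef]⟩
        (by simp; omega)
    have hxe := excess_prefix_wordPow m x hx
    rw [(List.suffix_replicate_iff.1 hy).2, excess_replicate_one] at hb
    -- `(g + h) |y| = g (|x| + |y|) ≥ |x| + |y| ≥ (g + h) (K + 2)`.
    have hyl : K + 2 ≤ y.length := by
      refine le_of_mul_le_mul_left (a := g + h) ?_ (by omega)
      nlinarith [Nat.mul_le_mul_right (x.length + y.length) hg]
    rw [abs_le] at hb
    omega

/-- The Dyck language is not `k`-rated linear for any nonnegative rational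
`k = g/h`; in particular it is not fix-rated linear (Example 8). -/
theorem dyck_not_rated_linear :
    (∀ g h : ℕ, Nat.Coprime g h → h ≠ 0 → ¬ IsRatedLinearLang g h dyckLang) ∧
    ¬ (∃ g h : ℕ, Nat.Coprime g h ∧ h ≠ 0 ∧ IsRatedLinearLang g h dyckLang) := by
  exact ⟨fun g h _ hh => dyck_not_isRatedLinearLang g h hh,
    fun ⟨g, h, _, hh, hL⟩ => dyck_not_isRatedLinearLang g h hh hL⟩
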